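/- arXiv:1610.05763 — 9 statements merged into one kernel-verified Lean document; each statement's English description precedes it below -/
import Mathlib

section
/- Let S be an r×r Fourier matrix with character table P, and assume that entrywise complex conjugation permutes the columns of P via an involution i ↦ i* (conj(p_{li}) = p_{l,i*} for all l, i). Suppose the structure constants satisfy λ_{i,i*,j} ≥ 0 for all i, j. Then the set L of columns of P whose degree equals 1 (i.e., columns p_{·j} with k_j = 1) is an abelian group under componentwise multiplication: the all-ones column p_{·0} belongs to L and is the identity, L is closed under componentwise product and under entrywise complex conjugation, and for every column b ∈ L the componentwise product of b with its entrywise conjugate equals p_{·0}. -/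
open Complex Matrix BigOperators

namespace FourierPaper

noncomputable section

/-- A Fourier matrix: symmetric, unitary, positive real 0-th column,
integral structure constants `N_{ijk}`. -/
structure IsFourier {r : ℕ} [NeZero r] (S : Matrix (Fin r) (Fin r) ℂ) : Prop where
  symm : ∀ i j, S i j = S j i
  unitary : S * S.conjTranspose = 1
  col0_real : ∀ i, (S i 0).im = 0
  col0_pos : ∀ i, 0 < (S i 0).re
  structInt : ∀ i j k : Fin r, ∃ z : ℤ,
    (∑ l, S l i * S l j * (starRingEnd ℂ) (S l k) / S l 0) = (z : ℂ)

/-- The Allen matrix of `S`: `s i j = S i j / S i 0`. -/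
def allen {r : ℕ} [NeZero r] (S : Matrix (Fin r) (Fin r) ℂ) : Matrix (Fin r) (Fin r) ℂ :=
  fun i j => S i j / S i 0

/-- The character table (first eigenmatrix): `p i j = s i j * s 0 j`. -/
def charTable {r : ℕ} [NeZero r] (S : Matrix (Fin r) (Fin r) ℂ) : Matrix (Fin r) (Fin r) ℂ :=
  fun i j => allen S i j * allen S 0 j

/-- The norm `d_i = ∑_j |s i j|²`. -/
def nrm {r : ℕ} [NeZero r] (S : Matrix (Fin r) (Fin r) ℂ) (i : Fin r) : ℝ :=
  ∑ j, Complex.normSq (allen S i j)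

/-- The degree `k_j = s_{0j}²` (a positive real, as `s 0 j` is a positive real). -/
def deg {r : ℕ} [NeZero r] (S : Matrix (Fin r) (Fin r) ℂ) (j : Fin r) : ℝ :=
  ((allen S 0 j).re) ^ 2

/-- The structure constant `N_{ijk}`. -/
def Nstruct {r : ℕ} [NeZero r] (S : Matrix (Fin r) (Fin r) ℂ) (i j k : Fin r) : ℂ :=
  ∑ l, S l i * S l j * (starRingEnd ℂ) (S l k) / S l 0

/-- The structure constant `λ_{ijk}` of the character-table basis. -/
def lam {r : ℕ} [NeZero r] (S : Matrix (Fin r) (Fin r) ℂ) (i j k : Fin r) : ℂ :=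
  Nstruct S i j k * allen S 0 i * allen S 0 j / allen S 0 k

/-- `S` has all real entries. -/
def RealMatrix {r : ℕ} (S : Matrix (Fin r) (Fin r) ℂ) : Prop :=
  ∀ i j, (S i j).im = 0

/-- Integrality hypothesis: every norm `d_i` is a positive integer dividing `d_0`. -/
def IntegralityHyp {r : ℕ} [NeZero r] (S : Matrix (Fin r) (Fin r) ℂ) : Prop :=
  ∃ D : Fin r → ℕ, (∀ i, 0 < D i) ∧ (∀ i, nrm S i = (D i : ℝ)) ∧ (∀ i, D i ∣ D 0)

/-- The set `L` of columns of the character table whose degree equals `1`. -/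
def Lset {r : ℕ} [NeZero r] (S : Matrix (Fin r) (Fin r) ℂ) : Set (Fin r → ℂ) :=
  {b | ∃ j : Fin r, deg S j = 1 ∧ ∀ l, b l = charTable S l j}

theorem IsFourier.orth {r : ℕ} [NeZero r] {S : Matrix (Fin r) (Fin r) ℂ} (hS : IsFourier S)
    (l m : Fin r) : ∑ k, S l k * (starRingEnd ℂ) (S m k) = if l = m then 1 else 0 := by
  have h := congrFun (congrFun hS.unitary l) m
  rw [Matrix.mul_apply, Matrix.one_apply] at h
  simpa [Matrix.conjTranspose_apply] using h

theorem IsFourier.expand {r : ℕ} [NeZero r] {S : Matrix (Fin r) (Fin r) ℂ} (hS : IsFourier S)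
    (v : Fin r → ℂ) (l : Fin r) :
    ∑ k, (∑ m, v m * (starRingEnd ℂ) (S m k)) * S l k = v l := by
  simp_rw [Finset.sum_mul]
  rw [Finset.sum_comm]
  have h : ∀ m, ∑ k, v m * (starRingEnd ℂ) (S m k) * S l k = if l = m then v m else 0 := by
    intro m
    have := hS.orth l m
    calc ∑ k, v m * (starRingEnd ℂ) (S m k) * S l k
        = v m * ∑ k, S l k * (starRingEnd ℂ) (S m k) := by
          rw [Finset.mul_sum]; exact Finset.sum_congr rfl (fun k _ => by ring)
      _ = _ := by rw [this]; simp
  simp [h]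

theorem IsFourier.parseval {r : ℕ} [NeZero r] {S : Matrix (Fin r) (Fin r) ℂ} (hS : IsFourier S)
    (v : Fin r → ℂ) (N : Fin r → ℂ) (hN : ∀ k, N k = ∑ m, v m * (starRingEnd ℂ) (S m k)) :
    ∑ k, N k * (starRingEnd ℂ) (N k) = ∑ l, v l * (starRingEnd ℂ) (v l) := by
  have h : ∀ l, v l = ∑ k, N k * S l k := by
    intro l; simp_rw [hN]; exact (hS.expand v l).symm
  calc ∑ k, N k * (starRingEnd ℂ) (N k)
      = ∑ k, ∑ m, v m * (starRingEnd ℂ) (S m k) * (starRingEnd ℂ) (N k) := by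
        refine Finset.sum_congr rfl (fun k _ => ?_)
        rw [← Finset.sum_mul, ← hN k]
    _ = ∑ m, ∑ k, v m * (starRingEnd ℂ) (S m k) * (starRingEnd ℂ) (N k) := Finset.sum_comm
    _ = _ := by
        refine Finset.sum_congr rfl (fun m _ => ?_)
        conv_rhs => rw [h m, map_sum, ← h m, Finset.mul_sum]
        exact Finset.sum_congr rfl (fun k _ => by rw [map_mul]; ring)

theorem IsFourier.ne {r : ℕ} [NeZero r] {S : Matrix (Fin r) (Fin r) ℂ} (hS : IsFourier S)
    (l : Fin r) : S l 0 ≠ 0 := by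
  intro h
  have := hS.col0_pos l
  simp [h] at this

theorem IsFourier.conj0 {r : ℕ} [NeZero r] {S : Matrix (Fin r) (Fin r) ℂ} (hS : IsFourier S)
    (l : Fin r) : (starRingEnd ℂ) (S l 0) = S l 0 :=
  Complex.conj_eq_iff_im.2 (hS.col0_real l)

theorem IsFourier.allen0 {r : ℕ} [NeZero r] {S : Matrix (Fin r) (Fin r) ℂ} (hS : IsFourier S)
    (j : Fin r) : ∃ u : ℝ, 0 < u ∧ allen S 0 j = (u : ℂ) := by
  refine ⟨(S j 0).re / (S 0 0).re, div_pos (hS.col0_pos j) (hS.col0_pos 0), ?_⟩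
  have h : ∀ l, S l 0 = (((S l 0).re : ℝ) : ℂ) := fun l =>
    Complex.ext (by simp) (by simp [hS.col0_real l])
  unfold allen
  rw [hS.symm 0 j]
  push_cast
  rw [← h j, ← h 0]

theorem IsFourier.allen_zero {r : ℕ} [NeZero r] {S : Matrix (Fin r) (Fin r) ℂ}
    (hS : IsFourier S) (l : Fin r) : allen S l 0 = 1 := div_self (hS.ne l)

theorem IsFourier.mul_allen {r : ℕ} [NeZero r] {S : Matrix (Fin r) (Fin r) ℂ}
    (hS : IsFourier S) (i j l : Fin r) :
    allen S l i * allen S l j = ∑ k, Nstruct S i j k * allen S l k := by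
  have h := hS.expand (fun m => S m i * S m j / S m 0) l
  have h2 : ∀ k, Nstruct S i j k
      = ∑ m, S m i * S m j / S m 0 * (starRingEnd ℂ) (S m k) := fun k =>
    Finset.sum_congr rfl (fun m _ => by ring)
  have h0 := hS.ne l
  simp only [← h2] at h
  unfold allen
  simp_rw [← mul_div_assoc]
  rw [← Finset.sum_div, h]
  field_simp

theorem deg_one {r : ℕ} [NeZero r] {S : Matrix (Fin r) (Fin r) ℂ}
    (hS : IsFourier S) {j : Fin r} (hj : deg S j = 1) : allen S 0 j = 1 := by
  obtain ⟨u, hu, h⟩ := hS.allen0 j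
  unfold deg at hj
  rw [h] at hj ⊢
  simp only [Complex.ofReal_re] at hj
  have : u = 1 := by nlinarith
  simp [this]

theorem allen_conj {r : ℕ} [NeZero r] {S : Matrix (Fin r) (Fin r) ℂ}
    (hS : IsFourier S) (st : Fin r → Fin r)
    (hconj : ∀ l i, (starRingEnd ℂ) (charTable S l i) = charTable S l (st i)) (i : Fin r) :
    allen S 0 (st i) = allen S 0 i ∧ ∀ l, (starRingEnd ℂ) (allen S l i) = allen S l (st i) := by
  obtain ⟨u, hu, h⟩ := hS.allen0 i
  obtain ⟨w, hw, h'⟩ := hS.allen0 (st i)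
  have h0 := hconj 0 i
  unfold charTable at h0 hconj
  rw [h, h', map_mul, Complex.conj_ofReal] at h0
  have h1 : u * u = w * w := by exact_mod_cast h0
  have h2 : u = w := by nlinarith
  subst h2
  refine ⟨by rw [h, h'], fun l => ?_⟩
  have h3 := hconj l i
  rw [h, h', map_mul, Complex.conj_ofReal] at h3
  exact mul_right_cancel₀ (by exact_mod_cast hu.ne') h3

theorem Nst0 {r : ℕ} [NeZero r] {S : Matrix (Fin r) (Fin r) ℂ}
    (hS : IsFourier S) (i i' : Fin r)
    (h : ∀ l, (starRingEnd ℂ) (allen S l i) = allen S l i') : Nstruct S i i' 0 = 1 := by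
  have h' : ∀ l, (starRingEnd ℂ) (S l i) = S l i' := by
    intro l
    have := h l
    unfold allen at this
    rw [map_div₀, hS.conj0] at this
    exact (div_left_inj' (hS.ne l)).1 this
  have := hS.orth i i
  rw [if_pos rfl] at this
  rw [← this]
  unfold Nstruct
  refine Finset.sum_congr rfl (fun l _ => ?_)
  have h0 := hS.ne l
  rw [hS.conj0, ← h', hS.symm i l]
  field_simp

theorem unit_of_deg_one {r : ℕ} [NeZero r] {S : Matrix (Fin r) (Fin r) ℂ}
    (hS : IsFourier S) (st : Fin r → Fin r)
    (hconj : ∀ l i, (starRingEnd ℂ) (charTable S l i) = charTable S l (st i))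
    (hlam : ∀ i j, 0 ≤ (lam S i (st i) j).re ∧ (lam S i (st i) j).im = 0)
    {i : Fin r} (hi : allen S 0 i = 1) (l : Fin r) :
    allen S l i * (starRingEnd ℂ) (allen S l i) = 1 := by
  obtain ⟨hc0, hc⟩ := allen_conj hS st hconj i
  have hN0 := Nst0 hS i (st i) hc
  have hz : ∀ k, ∃ z : ℤ, Nstruct S i (st i) k = (z : ℂ) := hS.structInt i (st i)
  choose z hz using hz
  choose u hu hau using hS.allen0
  have hzn : ∀ k, 0 ≤ (z k : ℝ) := by
    intro k
    have h1 := (hlam i k).1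
    unfold lam at h1
    rw [hc0, hi, hz, hau] at h1
    have h2 : ((z k : ℂ) * 1 * 1 / (u k : ℂ)) = (((z k : ℝ) / u k : ℝ) : ℂ) := by
      push_cast; ring
    rw [h2, Complex.ofReal_re] at h1
    by_contra hneg
    exact absurd (div_neg_of_neg_of_pos (not_le.1 hneg) (hu k)) (not_lt.2 h1)
  have hz0 : (z 0 : ℝ) = 1 := by
    rw [hz] at hN0
    exact_mod_cast hN0
  have hu0 : u 0 = 1 := by
    have := hau 0
    rw [hS.allen_zero] at this
    exact_mod_cast this.symm
  have hsum : ∑ k, (z k : ℝ) * u k = 1 := by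
    have := hS.mul_allen i (st i) 0
    rw [hc0, hi] at this
    simp_rw [hz, hau] at this
    have h3 : ((1 * 1 : ℝ) : ℂ) = ((∑ k, (z k : ℝ) * u k : ℝ) : ℂ) := by
      push_cast; exact this
    have := Complex.ofReal_injective h3
    linarith
  rw [← Finset.add_sum_erase _ _ (Finset.mem_univ (0 : Fin r)), hz0, hu0] at hsum
  have h0 : ∑ k ∈ Finset.univ.erase (0 : Fin r), (z k : ℝ) * u k = 0 := by linarith
  rw [Finset.sum_eq_zero_iff_of_nonneg (fun k _ => mul_nonneg (hzn k) (hu k).le)] at h0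
  have hzk : ∀ k, k ≠ 0 → Nstruct S i (st i) k = 0 := by
    intro k hk
    have := h0 k (by simp [hk])
    have h5 := (mul_eq_zero.1 this).resolve_right (hu k).ne'
    rw [hz]
    exact_mod_cast h5
  rw [hc, hS.mul_allen, Finset.sum_eq_single 0, hN0, hS.allen_zero, mul_one]
  · intro k _ hk
    rw [hzk k hk, zero_mul]
  · simp

theorem exists_prod {r : ℕ} [NeZero r] {S : Matrix (Fin r) (Fin r) ℂ}
    (hS : IsFourier S) {i j : Fin r} (hi : allen S 0 i = 1) (hj : allen S 0 j = 1)
    (hi1 : ∀ l, allen S l i * (starRingEnd ℂ) (allen S l i) = 1)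
    (hj1 : ∀ l, allen S l j * (starRingEnd ℂ) (allen S l j) = 1) :
    ∃ k, allen S 0 k = 1 ∧ ∀ l, allen S l i * allen S l j = allen S l k := by
  have hz : ∀ k, ∃ z : ℤ, Nstruct S i j k = (z : ℂ) := hS.structInt i j
  choose z hz using hz
  have hp := hS.parseval (fun m => S m i * S m j / S m 0) (Nstruct S i j)
    (fun k => Finset.sum_congr rfl (fun m _ => by ring))
  have hR : ∑ l, (S l i * S l j / S l 0) * (starRingEnd ℂ) (S l i * S l j / S l 0) = 1 := by
    have := hS.orth 0 0
    rw [if_pos rfl] at this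
    rw [← this]
    refine Finset.sum_congr rfl (fun l _ => ?_)
    have h0 := hS.ne l
    have e : S l i * S l j / S l 0 = allen S l i * allen S l j * S l 0 := by
      unfold allen; field_simp
    rw [e, hS.symm 0 l, map_mul, map_mul]
    linear_combination S l 0 * (starRingEnd ℂ) (S l 0) *
      (allen S l j * (starRingEnd ℂ) (allen S l j) * hi1 l + hj1 l)
  rw [hR] at hp
  have hq : ∑ k, z k * z k = 1 := by
    simp_rw [hz] at hp
    simp only [map_intCast] at hp
    exact_mod_cast hp
  obtain ⟨k, hk⟩ : ∃ k, z k ≠ 0 := by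
    by_contra! h
    simp [h] at hq
  rw [← Finset.add_sum_erase _ _ (Finset.mem_univ k)] at hq
  have hpos : 0 < z k * z k := mul_self_pos.2 hk
  have hnn : 0 ≤ ∑ m ∈ Finset.univ.erase k, z m * z m :=
    Finset.sum_nonneg (fun m _ => mul_self_nonneg _)
  have h0 : ∑ m ∈ Finset.univ.erase k, z m * z m = 0 := by omega
  have hk1 : z k * z k = 1 := by omega
  rw [Finset.sum_eq_zero_iff_of_nonneg (fun m _ => mul_self_nonneg _)] at h0
  have hmul : ∀ l, allen S l i * allen S l j = z k * allen S l k := by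
    intro l
    rw [hS.mul_allen, Finset.sum_eq_single k, hz]
    · intro m _ hm
      have := mul_self_eq_zero.1 (h0 m (by simp [hm]))
      rw [hz, this]; simp
    · simp
  obtain ⟨u, hu, hau⟩ := hS.allen0 k
  have h1 := hmul 0
  rw [hi, hj, hau] at h1
  have h2 : 1 * 1 = (z k : ℝ) * u := by exact_mod_cast h1
  have hz1 : z k = 1 := by
    rcases mul_self_eq_one_iff.1 hk1 with h | h
    · exact h
    · rw [h] at h2
      push_cast at h2
      linarith
  refine ⟨k, ?_, fun l => ?_⟩
  · rw [hz1] at h2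
    rw [hau]
    have : u = 1 := by push_cast at h2; linarith
    simp [this]
  · rw [hmul l, hz1]; simp

/-- the degree-one columns of the character table form an abelian group
under componentwise multiplication. -/
theorem stmt0 {r : ℕ} [NeZero r] (S : Matrix (Fin r) (Fin r) ℂ)
    (hS : IsFourier S)
    (st : Fin r → Fin r) (hinv : ∀ i, st (st i) = i)
    (hconj : ∀ l i, (starRingEnd ℂ) (charTable S l i) = charTable S l (st i))
    (hlam : ∀ i j, 0 ≤ (lam S i (st i) j).re ∧ (lam S i (st i) j).im = 0) :
    ((fun l => charTable S l 0) ∈ Lset S) ∧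
    (∀ b ∈ Lset S, ∀ c ∈ Lset S, (fun l => b l * c l) ∈ Lset S) ∧
    (∀ b ∈ Lset S, (fun l => (starRingEnd ℂ) (b l)) ∈ Lset S) ∧
    (∀ b ∈ Lset S, ∀ l, charTable S l 0 * b l = b l) ∧
    (∀ b ∈ Lset S, ∀ l, b l * (starRingEnd ℂ) (b l) = charTable S l 0) := by
  have key : ∀ b, b ∈ Lset S ↔ ∃ j, allen S 0 j = 1 ∧ ∀ l, b l = allen S l j := by
    intro b
    constructor
    · rintro ⟨j, hj, hb⟩
      have h := deg_one hS hj
      exact ⟨j, h, fun l => by rw [hb l, charTable, h, mul_one]⟩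
    · rintro ⟨j, h, hb⟩
      exact ⟨j, by simp [deg, h], fun l => by rw [hb l, charTable, h, mul_one]⟩
  have h0 : ∀ l, charTable S l 0 = 1 := fun l => by
    rw [charTable, hS.allen_zero, hS.allen_zero, mul_one]
  refine ⟨?_, ?_, ?_, ?_, ?_⟩
  · rw [key]
    exact ⟨0, hS.allen_zero 0, fun l => by rw [h0, hS.allen_zero]⟩
  · intro b hb c hc
    rw [key] at hb hc ⊢
    obtain ⟨i, hi, hb⟩ := hb
    obtain ⟨j, hj, hc⟩ := hc
    obtain ⟨k, hk, h⟩ := exists_prod hS hi hj (unit_of_deg_one hS st hconj hlam hi)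
      (unit_of_deg_one hS st hconj hlam hj)
    exact ⟨k, hk, fun l => by rw [hb, hc, h]⟩
  · intro b hb
    rw [key] at hb ⊢
    obtain ⟨i, hi, hb⟩ := hb
    obtain ⟨hc0, hc⟩ := allen_conj hS st hconj i
    exact ⟨st i, by rw [hc0, hi], fun l => by rw [hb, hc]⟩
  · intro b _ l
    rw [h0, one_mul]
  · intro b hb l
    rw [key] at hb
    obtain ⟨i, hi, hb⟩ := hb
    rw [hb, h0, unit_of_deg_one hS st hconj hlam hi]

end

end FourierPaper
end

section
/- Let S be an r×r real Fourier matrix with r even and r > 2, satisfying the integrality hypothesis, and suppose the structure constants satisfy λ_{iij} ≥ 0 for all i, j. Then it is not the case that exactly one index j ∈ {1,…,r−1} has degree k_j ≠ 1 (with k_l = 1 for all other l ∈ {1,…,r−1}). -/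
open Complex Matrix BigOperators

namespace FourierPaper

noncomputable section

/-- Real form of the argument. -/
theorem real_core {r : ℕ} [NeZero r] (R : Fin r → Fin r → ℝ)
    (hsym : ∀ i j, R i j = R j i)
    (horth : ∀ i j, ∑ l, R i l * R j l = if i = j then 1 else 0)
    (hpos : ∀ i, 0 < R i 0)
    (hn : ∀ i k, 0 ≤ ∑ l, R l i * R l i * R l k / R l 0)
    (i : Fin r) (hi : R 0 i = R 0 0) (m : Fin r) : R m i ^ 2 = R m 0 ^ 2 := by
  have key : ∀ m, ∑ k, (∑ l, R l i * R l i * R l k / R l 0) * R m k = R m i ^ 2 / R m 0 := by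
    intro m
    simp_rw [Finset.sum_mul]
    rw [Finset.sum_comm]
    have h : ∀ l, ∑ k, R l i * R l i * R l k / R l 0 * R m k
        = R l i * R l i / R l 0 * (if l = m then 1 else 0) := by
      intro l
      rw [← horth l m, Finset.mul_sum]
      apply Finset.sum_congr rfl
      intro k _
      ring
    simp_rw [h]
    simp
    ring
  have hn0 : ∑ l, R l i * R l i * R l 0 / R l 0 = 1 := by
    have := horth i i
    rw [if_pos rfl] at this
    rw [← this]
    apply Finset.sum_congr rfl
    intro l _
    rw [mul_div_assoc, div_self (hpos l).ne', hsym l i, mul_one]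
  have h0 := key 0
  rw [hi, sq, mul_div_assoc, div_self (hpos 0).ne', mul_one,
    ← Finset.add_sum_erase _ _ (Finset.mem_univ (0 : Fin r)), hn0, one_mul] at h0
  have hz : ∑ k ∈ Finset.univ.erase (0 : Fin r),
      (∑ l, R l i * R l i * R l k / R l 0) * R 0 k = 0 := by linarith
  rw [Finset.sum_eq_zero_iff_of_nonneg] at hz
  · have hm := key m
    rw [← Finset.add_sum_erase _ _ (Finset.mem_univ (0 : Fin r)), hn0, one_mul,
      Finset.sum_eq_zero, add_zero] at hm
    · have := (hpos m).ne'
      field_simp at hm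
      linarith
    · intro k hk
      have h1 := hz k hk
      have h2 : R 0 k ≠ 0 := by rw [hsym]; exact (hpos k).ne'
      rw [(mul_eq_zero.mp h1).resolve_right h2, zero_mul]
  · intro k _
    have h2 : 0 < R 0 k := by rw [hsym]; exact hpos k
    exact mul_nonneg (hn i k) h2.le

/-- for a real Fourier matrix of even rank `r > 2` with nonnegative
structure constants `λ_{iij}`, it is not the case that exactly one nontrivial
degree differs from `1`. -/
theorem stmt1 {r : ℕ} [NeZero r] (S : Matrix (Fin r) (Fin r) ℂ)
    (hS : IsFourier S) (hreal : RealMatrix S)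
    (hr : 2 < r) (heven : Even r)
    (hint : IntegralityHyp S)
    (hlam : ∀ i j, 0 ≤ (lam S i i j).re ∧ (lam S i i j).im = 0) :
    ¬ ∃ j : Fin r, j ≠ 0 ∧ deg S j ≠ 1 ∧ ∀ l : Fin r, l ≠ 0 → l ≠ j → deg S l = 1 := by
  rintro ⟨j, hj0, hj1, hl⟩
  obtain ⟨R, hR⟩ : ∃ R : Fin r → Fin r → ℝ, ∀ i j, S i j = (R i j : ℂ) :=
    ⟨fun i j => (S i j).re, fun i j => Complex.ext (by simp) (by simp [hreal i j])⟩
  have hsym : ∀ i j, R i j = R j i := by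
    intro i j
    have := hS.symm i j
    rw [hR, hR] at this
    exact_mod_cast this
  have hpos : ∀ i, 0 < R i 0 := by
    intro i
    have := hS.col0_pos i
    rwa [hR, Complex.ofReal_re] at this
  have horth : ∀ i j, ∑ l, R i l * R j l = if i = j then 1 else 0 := by
    intro i j
    have := congrFun (congrFun hS.unitary i) j
    simp only [Matrix.mul_apply, Matrix.conjTranspose_apply, hR, Matrix.one_apply,
      Complex.star_def, Complex.conj_ofReal] at this
    split_ifs at this ⊢ <;> exact_mod_cast this
  have hp : ∀ k, 0 < R 0 k := fun k => by rw [hsym]; exact hpos k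
  have hall : ∀ i j, allen S i j = ((R i j / R i 0 : ℝ) : ℂ) := by
    intro i j
    simp [allen, hR]
  have hn : ∀ i k, 0 ≤ ∑ l, R l i * R l i * R l k / R l 0 := by
    intro i k
    have h := (hlam i k).1
    have e : lam S i i k = (((∑ l, R l i * R l i * R l k / R l 0) *
        ((R 0 i / R 0 0) * (R 0 i / R 0 0) / (R 0 k / R 0 0)) : ℝ) : ℂ) := by
      simp only [lam, Nstruct, hall, hR, Complex.conj_ofReal]
      push_cast
      ring
    rw [e, Complex.ofReal_re] at h
    have c : 0 < (R 0 i / R 0 0) * (R 0 i / R 0 0) / (R 0 k / R 0 0) := by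
      have := hp i
      have := hp k
      have := hp 0
      positivity
    exact nonneg_of_mul_nonneg_left h c
  have hdeg : ∀ l, deg S l = (R 0 l / R 0 0) ^ 2 := by
    intro l
    rw [deg, hall, Complex.ofReal_re]
  have hnrm : ∀ i, nrm S i = 1 / R i 0 ^ 2 := by
    intro i
    have h := horth i i
    rw [if_pos rfl] at h
    rw [nrm, ← h, Finset.sum_div]
    apply Finset.sum_congr rfl
    intro k _
    rw [hall, Complex.normSq_ofReal]
    ring
  have heq : ∀ i, i ≠ j → R 0 i = R 0 0 := by
    intro i hi
    by_cases h0 : i = 0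
    · rw [h0]
    · have h := hl i h0 hi
      rw [hdeg] at h
      have h1 : R 0 i / R 0 0 = 1 := by
        have : 0 < R 0 i / R 0 0 := div_pos (hp i) (hp 0)
        nlinarith
      rwa [div_eq_one_iff_eq (hp 0).ne'] at h1
  have hsq : ∀ i, i ≠ j → ∀ m, R m i ^ 2 = R m 0 ^ 2 := fun i hi m =>
    real_core R hsym horth hpos hn i (heq i hi) m
  obtain ⟨D, hD, hDn, hDd⟩ := hint
  obtain ⟨k, hk⟩ := hDd j
  have hkdeg : deg S j = k := by
    have h1 := hDn j
    have h0 := hDn 0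
    rw [hk, Nat.cast_mul, ← h1, hnrm, hnrm] at h0
    rw [hdeg, hsym 0 j]
    have := (hpos 0).ne'
    have := (hpos j).ne'
    field_simp at h0 ⊢
    linarith
  have hk2 : 2 ≤ k := by
    have a : k ≠ 0 := by
      rintro rfl
      have := hD 0
      omega
    have b : k ≠ 1 := by
      rintro rfl
      exact hj1 (by simpa using hkdeg)
    omega
  have hsum : ∀ m, ((r : ℝ) - 1) * R m 0 ^ 2 + R m j ^ 2 = 1 := by
    intro m
    have h := horth m m
    rw [if_pos rfl, ← Finset.add_sum_erase _ _ (Finset.mem_univ j),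
      Finset.sum_congr rfl (g := fun _ => R m 0 ^ 2)] at h
    · rw [Finset.sum_const, Finset.card_erase_of_mem (Finset.mem_univ j), Finset.card_univ,
        Fintype.card_fin, nsmul_eq_mul, Nat.cast_sub (by omega)] at h
      push_cast at h
      linarith
    · intro i hi
      rw [← sq]
      exact hsq i (Finset.ne_of_mem_erase hi) m
  have h0 := hsum 0
  have hj := hsum j
  have hkk : R 0 j ^ 2 = k * R 0 0 ^ 2 := by
    rw [hdeg, div_pow, div_eq_iff (pow_ne_zero 2 (hp 0).ne')] at hkdeg
    exact hkdeg
  rw [hsym j 0, hkk] at hj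
  rw [hkk] at h0
  have hr4 : 4 ≤ r := by
    rcases heven with ⟨t, ht⟩
    omega
  have hr4' : (4 : ℝ) ≤ r := by exact_mod_cast hr4
  have hk2' : (2 : ℝ) ≤ k := by exact_mod_cast hk2
  have hA : 0 < R 0 0 ^ 2 := pow_pos (hp 0) 2
  have hfin : (((r : ℝ) - 1) * k) * R 0 0 ^ 2 ≤ ((r : ℝ) - 1 + k) * R 0 0 ^ 2 := by
    nlinarith [sq_nonneg (R j j)]
  have := le_of_mul_le_mul_right hfin hA
  nlinarith

end

end FourierPaper
end

section
/- Let S be an r×r real Fourier matrix with r ≥ 2 satisfying the integrality hypothesis. If the order d_0 is an odd integer, then there exists an index i ∈ {1,…,r−1} with degree k_i ≠ 1. -/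
open Complex Matrix BigOperators

namespace FourierPaper

noncomputable section

/-- Modulo two, the total of a symmetric array is its diagonal sum. -/
theorem symm_sum_parity {r : ℕ} (f : Fin r → Fin r → ZMod 2) (hf : ∀ i j, f i j = f j i) :
    ∑ i, ∑ j, f i j = ∑ i, f i i := by
  have h : ∑ p : Fin r × Fin r, (if p.1 = p.2 then 0 else f p.1 p.2) = 0 := by
    refine Finset.sum_involution (fun p _ => (p.2, p.1)) ?_ ?_ ?_ ?_
    · rintro ⟨i, j⟩ _
      by_cases hij : i = j
      · simp [hij]
      · simp only [hij, Ne.symm hij, if_false]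
        rw [hf j i]
        exact CharTwo.add_self_eq_zero _
    · rintro ⟨i, j⟩ _ hne heq
      simp only [Prod.mk.injEq] at heq
      exact hne (by simp [heq.2])
    · simp
    · simp
  rw [Fintype.sum_prod_type] at h
  have h2 : ∀ i, ∑ j, f i j = f i i + ∑ j, (if i = j then 0 else f i j) := by
    intro i
    have : f i i = ∑ j, (if i = j then f i j else 0) := by simp
    rw [this, ← Finset.sum_add_distrib]
    refine Finset.sum_congr rfl fun j _ => ?_
    split_ifs <;> simp
  simp only at h
  rw [Finset.sum_congr rfl fun i _ => h2 i, Finset.sum_add_distrib, h, add_zero]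

/-- a real Fourier matrix of rank `r ≥ 2` with odd order `d_0`
has some nontrivial degree different from `1`. -/
theorem stmt3 {r : ℕ} [NeZero r] (S : Matrix (Fin r) (Fin r) ℂ)
    (hS : IsFourier S) (hreal : RealMatrix S)
    (hr : 2 ≤ r)
    (D : Fin r → ℕ) (hDpos : ∀ i, 0 < D i) (hDeq : ∀ i, nrm S i = (D i : ℝ))
    (hDdvd : ∀ i, D i ∣ D 0)
    (hodd : Odd (D 0)) :
    ∃ i : Fin r, i ≠ 0 ∧ deg S i ≠ 1 := by
  by_contra hcon
  push Not at hcon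
  have hre : ∀ i j, (starRingEnd ℂ) (S i j) = S i j := fun i j =>
    Complex.conj_eq_iff_im.mpr (hreal i j)
  have hne : ∀ i, S i 0 ≠ 0 := fun i h => by
    have := hS.col0_pos i
    rw [h] at this
    simp at this
  set c : ℂ := S 0 0 with hc
  have hc0 : c ≠ 0 := hne 0
  have hdiv : ∀ i, S 0 i / c = 1 := by
    intro i
    by_cases hi : i = 0
    · rw [hi]; exact div_self hc0
    have h1 := hcon i hi
    have hx : S 0 i = (((S 0 i).re : ℝ) : ℂ) := by
      apply Complex.ext <;> simp [hreal 0 i]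
    have hy : c = (((S 0 0).re : ℝ) : ℂ) := by
      apply Complex.ext <;> simp [hc, hreal 0 0]
    have hpx : 0 < (S 0 i).re := by rw [hS.symm]; exact hS.col0_pos i
    have hpy : 0 < (S 0 0).re := hS.col0_pos 0
    unfold deg allen at h1
    rw [← hc, hx, hy, ← Complex.ofReal_div, Complex.ofReal_re] at h1
    have h2 : (S 0 i).re / (S 0 0).re = 1 := by
      have hp : 0 < (S 0 i).re / (S 0 0).re := div_pos hpx hpy
      nlinarith
    rw [hx, hy, ← Complex.ofReal_div, h2, Complex.ofReal_one]
  have hrow : ∀ i, S 0 i = c := fun i => by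
    have := hdiv i
    rwa [div_eq_one_iff_eq hc0] at this
  have hcol : ∀ i, S i 0 = c := fun i => by rw [hS.symm, hrow]
  have hD : D 0 = r := by
    have h := hDeq 0
    have h' : nrm S 0 = r := by
      unfold nrm allen
      simp [← hc, hdiv]
    rw [h'] at h
    exact_mod_cast h.symm
  have horth : ∀ l m, ∑ i, S l i * S m i = if l = m then 1 else 0 := by
    intro l m
    have h := congrFun (congrFun hS.unitary l) m
    rw [Matrix.mul_apply, Matrix.one_apply] at h
    rw [← h]
    refine Finset.sum_congr rfl fun i _ => ?_
    rw [Matrix.conjTranspose_apply]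
    exact congrArg _ (hre m i).symm
  have hT : ∀ l, ∑ i, S l i = if l = 0 then c⁻¹ else 0 := by
    intro l
    have h := horth l 0
    simp only [hrow] at h
    rw [← Finset.sum_mul] at h
    rw [eq_div_of_mul_eq hc0 h]
    split_ifs <;> simp
  have hrc : (r : ℂ) * c ^ 2 = 1 := by
    have h := horth 0 0
    simp only [hrow] at h
    simp at h
    rw [sq]; exact h
  choose z hz using hS.structInt
  simp only [hre, hcol] at hz
  let k : Fin r := ⟨1, hr⟩
  have hk : k ≠ 0 := by
    intro h
    have := congrArg Fin.val h
    simp [k] at this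
  have hsym : ∀ i j, z i j k = z j i k := by
    intro i j
    have : (z i j k : ℂ) = z j i k := by
      rw [← hz, ← hz]
      refine Finset.sum_congr rfl fun l _ => ?_
      ring
    exact_mod_cast this
  have htot : ∑ i, ∑ j, z i j k = (r : ℤ) := by
    have : ∑ i, ∑ j, (z i j k : ℂ) = r := by
      simp only [← hz]
      have e : ∀ i, ∑ j, ∑ l, S l i * S l j * S l k / c
          = ∑ l, S l i * ((∑ j, S l j) * S l k / c) := by
        intro i
        rw [Finset.sum_comm]
        refine Finset.sum_congr rfl fun l _ => ?_
        rw [Finset.sum_mul, Finset.sum_div, Finset.mul_sum]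
        refine Finset.sum_congr rfl fun j _ => ?_
        ring
      rw [Finset.sum_congr rfl fun i _ => e i, Finset.sum_comm]
      simp only [← Finset.sum_mul, hT]
      rw [Finset.sum_eq_single 0]
      · simp only [if_true, hrow]
        field_simp
        rw [mul_comm]; exact hrc.symm
      · intro l _ hl
        simp [hl]
      · simp
    exact_mod_cast this
  have hdiag : ∑ i, z i i k = 0 := by
    have : ∑ i, (z i i k : ℂ) = 0 := by
      simp only [← hz]
      rw [Finset.sum_comm]
      have e : ∀ l, ∑ i, S l i * S l i * S l k / c = S k l / c := by
        intro l
        rw [← Finset.sum_div, ← Finset.sum_mul, horth]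
        simp [hS.symm l k]
      rw [Finset.sum_congr rfl fun l _ => e l, ← Finset.sum_div, hT]
      simp [hk]
    exact_mod_cast this
  have hpar := symm_sum_parity (fun i j => ((z i j k : ℤ) : ZMod 2))
    (fun i j => by rw [hsym])
  have h1 := congrArg (Int.cast : ℤ → ZMod 2) htot
  have h2 := congrArg (Int.cast : ℤ → ZMod 2) hdiag
  push_cast at h1 h2
  rw [h1, h2, ZMod.natCast_eq_zero_iff_even] at hpar
  rw [hD] at hodd
  exact (Nat.not_even_iff_odd.mpr hodd) hpar

end

end FourierPaper
end

section
/- Let S be an r×r Fourier matrix satisfying the integrality hypothesis. Let t := #{j ∈ {0,…,r−1} : k_j = 1}, suppose t < r, and suppose there is a number k such that k_j = k for every index j with k_j ≠ 1. Then k is a positive integer dividing t. -/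
open Complex Matrix BigOperators

namespace FourierPaper

noncomputable section

/-- if `t` is the number of degrees equal to `1`, `t < r`, and all
degrees different from `1` are equal to a common value `k`, then `k` is a
positive integer dividing `t`. -/
theorem stmt4 {r : ℕ} [NeZero r] (S : Matrix (Fin r) (Fin r) ℂ)
    (hS : IsFourier S) (hint : IntegralityHyp S)
    (k : ℝ) (hk : ∀ j : Fin r, deg S j ≠ 1 → deg S j = k)
    (ht : {j : Fin r | deg S j = 1}.ncard < r) :
    ∃ m : ℕ, 0 < m ∧ k = (m : ℝ) ∧ m ∣ {j : Fin r | deg S j = 1}.ncard := by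
  obtain ⟨D, hpos, hD, hdvd⟩ := hint
  -- every norm is `1 / S_{i0}^2`
  have hre : ∀ i, S i 0 = (((S i 0).re : ℝ) : ℂ) := fun i => by
    apply Complex.ext <;> simp [hS.col0_real i]
  have hns : ∀ i, Complex.normSq (S i 0) = (S i 0).re ^ 2 := fun i => by
    rw [Complex.normSq_apply, hS.col0_real i]; ring
  have hrow : ∀ i, ∑ j, Complex.normSq (S i j) = 1 := fun i => by
    have h := congrFun (congrFun hS.unitary i) i
    rw [Matrix.mul_apply] at h
    simp only [Matrix.conjTranspose_apply, Matrix.one_apply_eq] at h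
    have h2 : ((∑ j, Complex.normSq (S i j) : ℝ) : ℂ) = ((1 : ℝ) : ℂ) := by
      push_cast
      rw [← h]
      refine Finset.sum_congr rfl fun j _ => ?_
      exact (Complex.mul_conj (S i j)).symm
    exact_mod_cast h2
  have hnrm : ∀ i, nrm S i = 1 / (S i 0).re ^ 2 := fun i => by
    unfold nrm allen
    simp only [Complex.normSq_div]
    rw [← Finset.sum_div, hrow, hns]
  have hal : ∀ j, allen S 0 j = (((S j 0).re / (S 0 0).re : ℝ) : ℂ) := fun j => by
    unfold allen
    rw [hS.symm 0 j, hre j, hre 0]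
    push_cast
    simp
  have hdegD : ∀ j, deg S j * (D j : ℝ) = (D 0 : ℝ) := fun j => by
    rw [← hD, ← hD, hnrm, hnrm]
    unfold deg
    rw [hal, Complex.ofReal_re]
    have h1 := (hS.col0_pos j).ne'
    have h0 := (hS.col0_pos 0).ne'
    field_simp
  have hsum : ∑ j, deg S j = (D 0 : ℝ) := by
    rw [← hD]
    unfold nrm deg
    refine Finset.sum_congr rfl fun j _ => ?_
    rw [hal, Complex.normSq_ofReal, Complex.ofReal_re, sq]
  -- an index of degree different from `1`
  have hex : ∃ j, deg S j ≠ 1 := by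
    by_contra! hall
    have : {j : Fin r | deg S j = 1} = Set.univ := by ext j; simp [hall j]
    rw [this] at ht
    simp at ht
  obtain ⟨j, hj⟩ := hex
  obtain ⟨m, hm⟩ := hdvd j
  have hDj : (D j : ℝ) ≠ 0 := by exact_mod_cast (hpos j).ne'
  have hkm : k = (m : ℝ) := by
    have h := hdegD j
    rw [hk j hj, hm] at h
    push_cast at h
    apply mul_right_cancel₀ hDj
    linarith
  have hm0 : 0 < m := by
    rcases Nat.eq_zero_or_pos m with h | h
    · have := hpos 0
      rw [hm, h] at this
      simp at this
    · exact h
  refine ⟨m, hm0, hkm, ?_⟩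
  classical
  have hcard : {j : Fin r | deg S j = 1}.ncard
      = (Finset.univ.filter fun j : Fin r => deg S j = 1).card := by
    rw [← Set.ncard_coe_finset]
    simp
  rw [hcard]
  have hsplit := Finset.sum_filter_add_sum_filter_not Finset.univ
    (fun j : Fin r => deg S j = 1) (fun j => deg S j)
  have e1 : ∑ x ∈ Finset.univ.filter (fun j : Fin r => deg S j = 1), deg S x
      = ((Finset.univ.filter fun j : Fin r => deg S j = 1).card : ℝ) := by
    rw [Finset.sum_congr rfl (g := fun _ => (1 : ℝ))
      (fun x hx => (Finset.mem_filter.mp hx).2)]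
    simp
  have e2 : ∑ x ∈ Finset.univ.filter (fun j : Fin r => ¬ deg S j = 1), deg S x
      = ((Finset.univ.filter fun j : Fin r => ¬ deg S j = 1).card : ℝ) * m := by
    rw [Finset.sum_congr rfl (g := fun _ => (m : ℝ))
      (fun x hx => (hk x (Finset.mem_filter.mp hx).2).trans hkm)]
    simp
  rw [e1, e2, hsum, hm] at hsplit
  have hnat : (Finset.univ.filter fun j : Fin r => deg S j = 1).card
      + (Finset.univ.filter fun j : Fin r => ¬ deg S j = 1).card * m = D j * m := by
    exact_mod_cast hsplit
  exact (Nat.dvd_add_left (Dvd.intro_left _ rfl)).mp (hnat ▸ Dvd.intro_left _ rfl)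

end

end FourierPaper
end

section
/- Let S be an r×r real Fourier matrix satisfying the integrality hypothesis, with structure constants λ_{iij} ≥ 0 for all i, j. Suppose there is a number k such that k_j = k for every index j with degree k_j ≠ 1, and at least one index j ∈ {1,…,r−1} has k_j ≠ 1. Then k is a power of 2 (k = 2^a for some nonnegative integer a). -/
open Complex Matrix BigOperators

namespace FourierPaper

noncomputable section

/-- Expansion of products in the fusion basis. -/
lemma aux_expand {r : ℕ} [NeZero r] (R : Fin r → Fin r → ℝ)
    (horth : ∀ i j, ∑ l, R i l * R j l = if i = j then 1 else 0)
    (v : Fin r → ℝ) (l : Fin r) :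
    ∑ j, (∑ m, v m * R m j) * R l j = v l := by
  simp_rw [Finset.sum_mul]
  rw [Finset.sum_comm]
  have : ∀ m, ∑ j, v m * R m j * R l j = v m * (if m = l then 1 else 0) := by
    intro m
    rw [← horth m l, Finset.mul_sum]
    exact Finset.sum_congr rfl fun j _ => by ring
  simp_rw [this]
  simp

/-- Integer vector of norm one has one entry of absolute value one. -/
lemma aux_int_norm {r : ℕ} (c : Fin r → ℤ) (h : ∑ j, c j ^ 2 = 1) :
    ∃ k, (c k = 1 ∨ c k = -1) ∧ ∀ j, j ≠ k → c j = 0 := by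
  have hex : ∃ k, c k ≠ 0 := by
    by_contra hcon
    push Not at hcon
    simp [hcon] at h
  obtain ⟨k, hk⟩ := hex
  have hsplit := Finset.add_sum_erase Finset.univ (fun j => c j ^ 2) (Finset.mem_univ k)
  have hnn : 0 ≤ ∑ j ∈ Finset.univ.erase k, c j ^ 2 :=
    Finset.sum_nonneg fun j _ => sq_nonneg _
  have hpos : 0 < c k ^ 2 := by positivity
  have h1 : c k ^ 2 = 1 := by omega
  have h0 : ∑ j ∈ Finset.univ.erase k, c j ^ 2 = 0 := by omega
  refine ⟨k, by simpa using h1, ?_⟩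
  intro j hj
  rw [Finset.sum_eq_zero_iff_of_nonneg (fun j _ => sq_nonneg _)] at h0
  have := h0 j (Finset.mem_erase.2 ⟨hj, Finset.mem_univ _⟩)
  exact pow_eq_zero_iff (two_ne_zero) |>.1 this

lemma aux_arith (n a M : ℕ) (t : ℝ) (ht : 0 < t) (h1 : t ^ 2 = n)
    (h2 : (n : ℝ) = (2 : ℝ) ^ a + t * M) : ∃ b : ℕ, (n : ℝ) = (2 : ℝ) ^ b := by
  rcases Nat.eq_zero_or_pos M with hM | hM
  · exact ⟨a, by rw [h2, hM]; simp⟩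
  have hM' : (0 : ℝ) < M := by exact_mod_cast hM
  have hq : t = (((n : ℚ) - 2 ^ a) / M : ℚ) := by
    push_cast
    rw [eq_div_iff hM'.ne']
    linarith
  set q : ℚ := ((n : ℚ) - 2 ^ a) / M with hqdef
  have hq2 : q ^ 2 = n := by
    rw [hq] at h1
    exact_mod_cast h1
  have hqi : IsIntegral ℤ q := by
    have h3 : IsIntegral ℤ (q ^ 2) := by
      rw [hq2]
      exact_mod_cast (isIntegral_algebraMap (R := ℤ) (A := ℚ) (x := (n : ℤ)))
    exact IsIntegral.of_pow (n := 2) (by norm_num) h3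
  obtain ⟨z, hz⟩ := IsIntegrallyClosed.isIntegral_iff.1 hqi
  have hz' : t = (z : ℝ) := by
    rw [hq, ← hz]; simp
  have hzpos : 0 < z := by
    rw [hz'] at ht; exact_mod_cast ht
  obtain ⟨m, rfl⟩ := Int.eq_ofNat_of_zero_le hzpos.le
  have hz2 : t = (m : ℝ) := by rw [hz']; simp
  rw [hz2] at h1 h2
  have h1' : m ^ 2 = n := by exact_mod_cast h1
  have h2' : n = 2 ^ a + m * M := by exact_mod_cast h2
  have hd : m ∣ 2 ^ a := by
    rw [Nat.dvd_add_iff_left (Dvd.intro M rfl), ← h2', ← h1']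
    exact dvd_pow_self _ two_ne_zero
  obtain ⟨b, -, hb⟩ := (Nat.dvd_prime_pow Nat.prime_two).1 hd
  refine ⟨b * 2, ?_⟩
  rw [← h1', hb]
  push_cast
  rw [pow_mul]

/-- The real form of the main argument. -/
lemma aux_main {r : ℕ} [NeZero r] (R : Fin r → Fin r → ℝ) (N : Fin r → Fin r → Fin r → ℤ)
    (hsymm : ∀ i j, R i j = R j i)
    (horth : ∀ i j, ∑ l, R i l * R j l = if i = j then 1 else 0)
    (hpos : ∀ i, 0 < R i 0)
    (hN : ∀ i j k, ∑ l, R l i * R l j * R l k / R l 0 = N i j k)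
    (hNpos : ∀ i j, 0 ≤ N i i j)
    (i : Fin r) (n : ℕ) (hn : (R 0 i / R 0 0) ^ 2 = n)
    (hk : ∀ j, R 0 j ≠ R 0 0 → R 0 j = R 0 i) :
    ∃ b : ℕ, (n : ℝ) = (2 : ℝ) ^ b := by
  classical
  have hpos' : ∀ i, 0 < R 0 i := fun i => by rw [hsymm]; exact hpos i
  have horthc : ∀ i j, ∑ l, R l i * R l j = if i = j then 1 else 0 := by
    intro i j
    rw [← horth i j]
    exact Finset.sum_congr rfl fun l _ => by rw [hsymm l i, hsymm l j]
  -- product expansion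
  have hprod : ∀ i j l, ∑ k, (N i j k : ℝ) * R l k = R l i * R l j / R l 0 := by
    intro i j l
    rw [← aux_expand R horth (fun l => R l i * R l j / R l 0) l]
    refine Finset.sum_congr rfl fun k _ => ?_
    rw [← hN]
    congr 1
    exact Finset.sum_congr rfl fun l _ => by ring
  have hN0 : ∀ i, N i i 0 = 1 := by
    intro i
    have h := hN i i 0
    have h2 := horthc i i
    rw [if_pos rfl] at h2
    have : ∑ l, R l i * R l i * R l 0 / R l 0 = 1 := by
      rw [← h2]
      exact Finset.sum_congr rfl fun l _ => by field_simp [(hpos l).ne']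
    rw [this] at h
    exact_mod_cast h.symm
  -- degree one elements square to one
  have hsq : ∀ g, R 0 g = R 0 0 → ∀ l, R l g ^ 2 = R l 0 ^ 2 := by
    intro g hg l
    have h := hprod g g 0
    rw [hg, mul_div_assoc, div_self (hpos 0).ne', mul_one,
      ← Finset.add_sum_erase Finset.univ _ (Finset.mem_univ 0), hN0] at h
    have h0 : ∑ k ∈ Finset.univ.erase 0, (N g g k : ℝ) * R 0 k = 0 := by
      push_cast at h; linarith
    have hnn : ∀ k ∈ Finset.univ.erase (0 : Fin r), 0 ≤ (N g g k : ℝ) * R 0 k :=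
      fun k _ => mul_nonneg (by exact_mod_cast hNpos g k) (hpos' k).le
    rw [Finset.sum_eq_zero_iff_of_nonneg hnn] at h0
    have h3 := hprod g g l
    rw [← Finset.add_sum_erase Finset.univ _ (Finset.mem_univ 0), hN0,
      Finset.sum_eq_zero] at h3
    · have := (hpos l).ne'
      field_simp at h3
      push_cast at h3
      linarith
    · intro k hk
      rcases mul_eq_zero.1 (h0 k hk) with h | h
      · rw [h, zero_mul]
      · exact absurd h (hpos' k).ne'
  have hclosed : ∀ g h, R 0 g = R 0 0 → R 0 h = R 0 0 →
      ∃ k, ∀ l, R l k = R l g * R l h / R l 0 := by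
    intro g h hg hh
    have hnorm : ∑ k, (N g h k) ^ 2 = 1 := by
      have : ∑ k, (N g h k : ℝ) ^ 2 = 1 := by
        calc ∑ k, (N g h k : ℝ) ^ 2
            = ∑ k, (N g h k : ℝ) * ∑ l, R l g * R l h * R l k / R l 0 := by
              refine Finset.sum_congr rfl fun k _ => ?_
              rw [hN]; ring
          _ = ∑ l, (∑ k, (N g h k : ℝ) * R l k) * (R l g * R l h / R l 0) := by
              simp_rw [Finset.mul_sum, Finset.sum_mul]
              rw [Finset.sum_comm]
              refine Finset.sum_congr rfl fun l _ => Finset.sum_congr rfl fun k _ => ?_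
              ring
          _ = ∑ l, R l 0 * R l 0 := by
              refine Finset.sum_congr rfl fun l _ => ?_
              rw [hprod]
              have h1 := hsq g hg l
              have h2 := hsq h hh l
              have h3 := (hpos l).ne'
              field_simp
              rw [h1, h2]; ring
          _ = 1 := by rw [horthc]; simp
      exact_mod_cast this
    obtain ⟨k, hk1, hk0⟩ := aux_int_norm _ hnorm
    have hval : ∀ l, (N g h k : ℝ) * R l k = R l g * R l h / R l 0 := by
      intro l
      rw [← hprod g h l]
      symm
      apply Finset.sum_eq_single k
      · intro j _ hj
        rw [hk0 j hj]; simp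
      · simp
    refine ⟨k, fun l => ?_⟩
    rcases hk1 with h1 | h1
    · rw [← hval l, h1]; simp
    · exfalso
      have := hval 0
      rw [h1, hg, hh] at this
      have h5 : 0 < R 0 0 * R 0 0 / R 0 0 := by have := hpos 0; positivity
      have := hpos' k
      push_cast at *
      linarith
  let H : Subgroup (Fin r → ℤˣ) :=
    { carrier := {f | (∃ g, R 0 g = R 0 0 ∧ ∀ l, R l g = ((f l : ℤ) : ℝ) * R l 0) ∧
        ∀ l, R l i ≠ 0 → f l = 1}
      one_mem' := ⟨⟨0, rfl, fun l => by simp⟩, fun l _ => rfl⟩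
      mul_mem' := by
        rintro f f' ⟨⟨g, hg, hgl⟩, hf⟩ ⟨⟨h, hh, hhl⟩, hf'⟩
        refine ⟨?_, fun l hl => by simp [hf l hl, hf' l hl]⟩
        obtain ⟨k, hk⟩ := hclosed g h hg hh
        refine ⟨k, ?_, fun l => ?_⟩
        · rw [hk 0, hg, hh]
          have := (hpos 0).ne'
          field_simp
        · rw [hk l, hgl, hhl]
          have := (hpos l).ne'
          field_simp
          simp
      inv_mem' := by
        rintro f ⟨⟨g, hg, hgl⟩, hf⟩
        refine ⟨⟨g, hg, fun l => ?_⟩, fun l hl => by simp [hf l hl]⟩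
        rw [hgl l, Pi.inv_apply, Int.units_inv_eq_self] }
  have hHp : IsPGroup 2 H := by
    intro x
    refine ⟨1, ?_⟩
    ext l
    simp [Int.units_sq]
  haveI : Fact (Nat.Prime 2) := ⟨Nat.prime_two⟩
  obtain ⟨a, ha⟩ := IsPGroup.iff_card.1 hHp
  -- N i i g for degree one g
  have hsumi : ∑ l, R l i * R l i = 1 := by rw [horthc]; simp
  have hN1 : ∀ g, R 0 g = R 0 0 →
      N i i g = if (∀ l, R l i ≠ 0 → R l g = R l 0) then 1 else 0 := by
    intro g hg
    have hle : ∀ l, R l i * R l i * R l g / R l 0 ≤ R l i * R l i := by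
      intro l
      have h0 := hpos l
      rw [div_le_iff₀ h0]
      have h1 := abs_le_of_sq_le_sq' (hsq g hg l).le h0.le
      exact mul_le_mul_of_nonneg_left h1.2 (mul_self_nonneg _)
    have hle1 : (N i i g : ℝ) ≤ 1 := by
      rw [← hN, ← hsumi]
      exact Finset.sum_le_sum fun l _ => hle l
    have hle2 : N i i g ≤ 1 := by exact_mod_cast hle1
    have hge := hNpos i g
    split_ifs with hc
    · have : (N i i g : ℝ) = 1 := by
        rw [← hN, ← hsumi]
        refine Finset.sum_congr rfl fun l _ => ?_
        by_cases hl : R l i = 0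
        · simp [hl]
        · rw [hc l hl]
          have := (hpos l).ne'
          field_simp
      exact_mod_cast this
    · by_contra hne
      have h1 : N i i g = 1 := by omega
      apply hc
      intro l hl
      have h2 : ∑ l, R l i * R l i * R l g / R l 0 = ∑ l, R l i * R l i := by
        rw [hN, h1, hsumi]; simp
      have h3 := (Finset.sum_eq_sum_iff_of_le (fun l _ => hle l)).1 h2 l (Finset.mem_univ l)
      have := (hpos l).ne'
      field_simp at h3
      exact h3
  -- the count
  set T : Finset (Fin r) := Finset.univ.filter
    (fun g => R 0 g = R 0 0 ∧ ∀ l, R l i ≠ 0 → R l g = R l 0) with hT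
  have hcard : T.card = 2 ^ a := by
    rw [← ha, ← Nat.card_eq_finsetCard T]
    have hmem : ∀ f : H, ∃ g : T, ∀ l, R l g = (((f : Fin r → ℤˣ) l : ℤ) : ℝ) * R l 0 := by
      rintro ⟨f, ⟨⟨g, hg, hgl⟩, hf⟩⟩
      refine ⟨⟨g, ?_⟩, hgl⟩
      simp only [hT, Finset.mem_filter, Finset.mem_univ, true_and]
      refine ⟨hg, fun l hl => ?_⟩
      rw [hgl l, hf l hl]; simp
    choose φ hφ using hmem
    symm
    apply Nat.card_congr
    refine Equiv.ofBijective φ ⟨?_, ?_⟩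
    · intro f f' hff
      ext l
      have h1 := hφ f l
      rw [hff, hφ f' l] at h1
      have h2 := mul_right_cancel₀ (hpos l).ne' h1
      exact_mod_cast h2.symm
    · rintro ⟨g, hgT⟩
      have hgT' := hgT
      simp only [hT, Finset.mem_filter, Finset.mem_univ, true_and] at hgT'
      obtain ⟨hg, hgs⟩ := hgT'
      let f : Fin r → ℤˣ := fun l => if R l g = R l 0 then 1 else -1
      have hfl : ∀ l, R l g = ((f l : ℤ) : ℝ) * R l 0 := by
        intro l
        by_cases h : R l g = R l 0
        · simp [f, h]
        · have := (sq_eq_sq_iff_eq_or_eq_neg.1 (hsq g hg l)).resolve_left h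
          simp only [f, if_neg h]
          rw [this]; simp
      have hfH : f ∈ H := ⟨⟨g, hg, hfl⟩, fun l hl => by simp [f, hgs l hl]⟩
      refine ⟨⟨f, hfH⟩, ?_⟩
      have heq : ∀ l, R l (φ ⟨f, hfH⟩) = R l g := fun l => by rw [hφ, hfl]
      apply Subtype.ext
      by_contra hne
      have h1 := horthc (φ ⟨f, hfH⟩ : Fin r) g
      rw [if_neg hne] at h1
      simp_rw [heq] at h1
      rw [horthc] at h1
      simp at h1
  -- conclusion
  have hmain := hprod i i 0
  set t : ℝ := R 0 i / R 0 0 with ht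
  have h00 := hpos 0
  have htpos : 0 < t := div_pos (hpos' i) h00
  have hRi : R 0 i = t * R 0 0 := by rw [ht]; field_simp
  set M : ℤ := ∑ j ∈ Finset.univ.filter (fun j => ¬ R 0 j = R 0 0), N i i j with hM
  have hMnn : 0 ≤ M := Finset.sum_nonneg fun j _ => hNpos i j
  rw [← Finset.sum_filter_add_sum_filter_not Finset.univ (fun j => R 0 j = R 0 0)] at hmain
  have hA : ∑ j ∈ Finset.univ.filter (fun j => R 0 j = R 0 0), (N i i j : ℝ) * R 0 j
      = (2 : ℝ) ^ a * R 0 0 := by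
    have h1 : ∀ j ∈ Finset.univ.filter (fun j => R 0 j = R 0 0), (N i i j : ℝ) * R 0 j
        = (if (∀ l, R l i ≠ 0 → R l j = R l 0) then 1 else 0) * R 0 0 := by
      intro j hj
      have hj' := (Finset.mem_filter.1 hj).2
      rw [hN1 j hj', hj']
      push_cast
      rfl
    rw [Finset.sum_congr rfl h1, ← Finset.sum_mul, Finset.sum_boole, Finset.filter_filter]
    congr 1
    exact_mod_cast hcard
  have hB : ∑ j ∈ Finset.univ.filter (fun j => ¬ R 0 j = R 0 0), (N i i j : ℝ) * R 0 j
      = (M : ℝ) * (t * R 0 0) := by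
    rw [hM, Int.cast_sum, Finset.sum_mul]
    refine Finset.sum_congr rfl fun j hj => ?_
    rw [hk j (Finset.mem_filter.1 hj).2, hRi]
  rw [hA, hB, hRi] at hmain
  have hfin : (n : ℝ) = (2 : ℝ) ^ a + t * M := by
    rw [← hn]
    have := h00.ne'
    field_simp at hmain
    linarith
  obtain ⟨m, hm⟩ := Int.eq_ofNat_of_zero_le hMnn
  refine aux_arith n a m t htpos hn ?_
  rw [hfin, hm]
  simp

/-- for a real Fourier matrix with nonnegative structure constants
`λ_{iij}`, if all degrees different from `1` are equal to a common value `k`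
(and some nontrivial degree is different from `1`), then `k` is a power of `2`. -/
theorem stmt5 {r : ℕ} [NeZero r] (S : Matrix (Fin r) (Fin r) ℂ)
    (hS : IsFourier S) (hreal : RealMatrix S)
    (hint : IntegralityHyp S)
    (hlam : ∀ i j, 0 ≤ (lam S i i j).re ∧ (lam S i i j).im = 0)
    (k : ℝ) (hk : ∀ j : Fin r, deg S j ≠ 1 → deg S j = k)
    (hex : ∃ j : Fin r, j ≠ 0 ∧ deg S j ≠ 1) :
    ∃ a : ℕ, k = (2 : ℝ) ^ a := by
  have hSR : ∀ i j, S i j = (((S i j).re : ℝ) : ℂ) := fun i j =>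
    Complex.ext (by simp) (by simp [hreal i j])
  obtain ⟨R, hR⟩ : ∃ R : Fin r → Fin r → ℝ, ∀ i j, S i j = (R i j : ℂ) :=
    ⟨fun i j => (S i j).re, hSR⟩
  have hsymm : ∀ i j, R i j = R j i := by
    intro i j
    have := hS.symm i j
    rw [hR, hR] at this
    exact_mod_cast this
  have hpos : ∀ i, 0 < R i 0 := by
    intro i
    have := hS.col0_pos i
    rw [hR] at this
    simpa using this
  have horth : ∀ i j, ∑ l, R i l * R j l = if i = j then 1 else 0 := by
    intro i j
    have := congrFun (congrFun hS.unitary i) j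
    simp only [Matrix.mul_apply, Matrix.conjTranspose_apply, hR, Matrix.one_apply] at this
    have h2 := congrArg Complex.re this
    split_ifs at h2 ⊢ <;> simpa using h2
  have hNex : ∀ i j k : Fin r, ∃ z : ℤ, ∑ l, R l i * R l j * R l k / R l 0 = z := by
    intro i j k
    obtain ⟨z, hz⟩ := hS.structInt i j k
    refine ⟨z, ?_⟩
    simp only [hR, Complex.conj_ofReal] at hz
    exact_mod_cast hz
  choose N hN using hNex
  have hpos' : ∀ i, 0 < R 0 i := fun i => by rw [hsymm]; exact hpos i
  have hNs : ∀ i j k, Nstruct S i j k = ((N i j k : ℝ) : ℂ) := by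
    intro i j k
    rw [← hN]
    simp only [Nstruct, hR, Complex.conj_ofReal]
    push_cast
    rfl
  have hal : ∀ i j, allen S i j = ((R i j / R i 0 : ℝ) : ℂ) := by
    intro i j
    simp only [allen, hR]
    push_cast
    rfl
  have hdeg : ∀ j, deg S j = (R 0 j / R 0 0) ^ 2 := by
    intro j
    simp only [deg, hal, Complex.ofReal_re]
  have hNpos : ∀ i j, 0 ≤ N i i j := by
    intro i j
    have h := (hlam i j).1
    simp only [lam, hNs, hal] at h
    rw [← Complex.ofReal_mul, ← Complex.ofReal_mul, ← Complex.ofReal_div, Complex.ofReal_re] at h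
    by_contra hneg
    push Not at hneg
    have h1 : (N i i j : ℝ) < 0 := by exact_mod_cast hneg
    have hi : 0 < R 0 i / R 0 0 := div_pos (hpos' i) (hpos 0)
    have hj : 0 < R 0 j / R 0 0 := div_pos (hpos' j) (hpos 0)
    have : (N i i j : ℝ) * (R 0 i / R 0 0) * (R 0 i / R 0 0) / (R 0 j / R 0 0) < 0 :=
      div_neg_of_neg_of_pos (mul_neg_of_neg_of_pos (mul_neg_of_neg_of_pos h1 hi) hi) hj
    linarith
  have hnrm : ∀ i, nrm S i = 1 / (R i 0) ^ 2 := by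
    intro i
    have h := horth i i
    rw [if_pos rfl] at h
    rw [← h, Finset.sum_div]
    simp only [nrm, hal, Complex.normSq_ofReal]
    refine Finset.sum_congr rfl fun l _ => ?_
    rw [div_mul_div_comm, sq]
  obtain ⟨i, -, hi⟩ := hex
  have hki := hk i hi
  have hone : ∀ j, deg S j ≠ 1 ↔ R 0 j ≠ R 0 0 := by
    intro j
    have : 0 < R 0 j / R 0 0 := div_pos (hpos' j) (hpos 0)
    rw [hdeg, ne_eq, ne_eq, not_iff_not, pow_eq_one_iff_of_nonneg this.le two_ne_zero,
      div_eq_one_iff_eq (hpos 0).ne']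
  obtain ⟨D, hD0, hD, hDd⟩ := hint
  obtain ⟨n, hn⟩ := hDd i
  have hnk : (R 0 i / R 0 0) ^ 2 = n := by
    have h1 := hD i
    have h2 := hD 0
    rw [hn, hnrm] at h2
    rw [hnrm] at h1
    push_cast at h2
    rw [← h1] at h2
    have := (hpos 0).ne'
    have := (hpos i).ne'
    rw [hsymm 0 i]
    field_simp at h2 ⊢
    linarith
  have := aux_main R N hsymm horth hpos hN hNpos i n hnk (by
    intro j hj
    have h1 := hk j ((hone j).2 hj)
    rw [← hki, hdeg, hdeg] at h1
    have h2 := (sq_eq_sq₀ (div_pos (hpos' j) (hpos 0)).le (div_pos (hpos' i) (hpos 0)).le).1 h1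
    exact (div_left_inj' (hpos 0).ne').1 h2)
  rw [← hki, hdeg, hnk]
  exact this

end

end FourierPaper
end

section
/- Let S be an r×r Fourier matrix satisfying the integrality hypothesis. Suppose there is an index j₀ ∈ {1,…,r−1} with degree k_{j₀} ≠ 1 such that k_{j₀} ≤ k_l and k_{j₀} divides k_l for every index l with k_l ≠ 1. Then the number of indices j ∈ {0,…,r−1} with k_j = 1 is a multiple of k_{j₀}. -/
open Complex Matrix BigOperators

namespace FourierPaper

noncomputable section

theorem aux_real {r : ℕ} [NeZero r] (S : Matrix (Fin r) (Fin r) ℂ) (hS : IsFourier S)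
    (i : Fin r) : S i 0 = (((S i 0).re : ℝ) : ℂ) := by
  apply Complex.ext <;> simp [hS.col0_real i]

theorem aux_row {r : ℕ} [NeZero r] (S : Matrix (Fin r) (Fin r) ℂ) (hS : IsFourier S)
    (i : Fin r) : ∑ j, Complex.normSq (S i j) = 1 := by
  have h := congrFun (congrFun hS.unitary i) i
  rw [Matrix.mul_apply, Matrix.one_apply_eq] at h
  have h2 : ((∑ j, Complex.normSq (S i j) : ℝ) : ℂ) = 1 := by
    rw [← h]
    push_cast
    refine Finset.sum_congr rfl fun j _ => ?_
    rw [Matrix.conjTranspose_apply, Complex.star_def, Complex.mul_conj]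
  exact_mod_cast h2

theorem aux_nrm {r : ℕ} [NeZero r] (S : Matrix (Fin r) (Fin r) ℂ) (hS : IsFourier S)
    (i : Fin r) : nrm S i * (S i 0).re ^ 2 = 1 := by
  have hp := hS.col0_pos i
  have hn : Complex.normSq (S i 0) = (S i 0).re ^ 2 := by
    rw [Complex.normSq_apply, hS.col0_real i]; ring
  unfold nrm allen
  simp only [map_div₀]
  rw [← Finset.sum_div, aux_row S hS i, hn]
  field_simp

theorem aux_allen {r : ℕ} [NeZero r] (S : Matrix (Fin r) (Fin r) ℂ) (hS : IsFourier S)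
    (j : Fin r) : allen S 0 j = (((S j 0).re / (S 0 0).re : ℝ) : ℂ) := by
  unfold allen
  rw [hS.symm 0 j, Complex.ofReal_div, ← aux_real S hS j, ← aux_real S hS 0]

theorem aux_deg {r : ℕ} [NeZero r] (S : Matrix (Fin r) (Fin r) ℂ) (hS : IsFourier S)
    (j : Fin r) : deg S j * nrm S j = nrm S 0 := by
  have h0 := hS.col0_pos 0
  have hj := hS.col0_pos j
  have e0 := aux_nrm S hS 0
  have ej := aux_nrm S hS j
  unfold deg
  rw [aux_allen S hS j, Complex.ofReal_re, div_pow, div_mul_eq_mul_div,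
    div_eq_iff (by positivity)]
  linarith

theorem aux_sum {r : ℕ} [NeZero r] (S : Matrix (Fin r) (Fin r) ℂ) (hS : IsFourier S) :
    ∑ j, deg S j = nrm S 0 := by
  unfold nrm deg
  refine Finset.sum_congr rfl fun j _ => ?_
  rw [aux_allen S hS j, Complex.ofReal_re, Complex.normSq_ofReal, sq]

/-- if `k_{j₀} ≠ 1` is a smallest nontrivial degree dividing all the
nontrivial degrees, then the number of degrees equal to `1` is a multiple of `k_{j₀}`. -/
theorem stmt6 {r : ℕ} [NeZero r] (S : Matrix (Fin r) (Fin r) ℂ)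
    (hS : IsFourier S) (hint : IntegralityHyp S)
    (j₀ : Fin r) (hj₀ : j₀ ≠ 0) (hne : deg S j₀ ≠ 1)
    (hmin : ∀ l : Fin r, deg S l ≠ 1 →
      deg S j₀ ≤ deg S l ∧ ∃ m : ℤ, deg S l = deg S j₀ * (m : ℝ)) :
    ∃ m : ℤ, ({j : Fin r | deg S j = 1}.ncard : ℝ) = deg S j₀ * (m : ℝ) := by
  classical
  obtain ⟨D, -, hD, -⟩ := hint
  have hm : ∀ l : Fin r, ∃ m : ℤ, deg S l ≠ 1 → deg S l = deg S j₀ * (m : ℝ) := by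
    intro l
    by_cases h : deg S l = 1
    · exact ⟨0, fun h' => absurd h h'⟩
    · obtain ⟨m, hm⟩ := (hmin l h).2
      exact ⟨m, fun _ => hm⟩
  choose m hm using hm
  have h1 := aux_sum S hS
  rw [← aux_deg S hS j₀, hD,
    ← Finset.sum_filter_add_sum_filter_not Finset.univ (fun j => deg S j = 1)] at h1
  have h2 : ∑ j ∈ Finset.univ.filter (fun j => deg S j = 1), deg S j
      = ({j : Fin r | deg S j = 1}.ncard : ℝ) := by
    rw [Finset.sum_congr rfl (g := fun _ => (1 : ℝ)) (by simp), Finset.sum_const,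
      Set.ncard_eq_toFinset_card']
    simp
  have h3 : ∑ j ∈ Finset.univ.filter (fun j => ¬ deg S j = 1), deg S j
      = deg S j₀ * ((∑ j ∈ Finset.univ.filter (fun j => ¬ deg S j = 1), m j : ℤ) : ℝ) := by
    push_cast
    rw [Finset.mul_sum]
    refine Finset.sum_congr rfl fun j hj => hm j (by simpa using hj)
  rw [h2, h3] at h1
  refine ⟨(D j₀ : ℤ) - ∑ j ∈ Finset.univ.filter (fun j => ¬ deg S j = 1), m j, ?_⟩
  rw [Int.cast_sub, Int.cast_natCast, mul_sub]
  linarith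

end

end FourierPaper
end

section
/- If k₁, k₂, k₃ are positive integers, each of which is a perfect square, and each kᵢ divides 1 + k₁ + k₂ + k₃, then k₁ = k₂ = k₃ = 1. -/
theorem sq_mod8 (k : ℕ) (h : IsSquare k) : k % 8 = 0 ∨ k % 8 = 1 ∨ k % 8 = 4 := by
  obtain ⟨m, rfl⟩ := h
  have : m % 8 < 8 := Nat.mod_lt _ (by norm_num)
  rw [Nat.mul_mod]
  interval_cases m % 8 <;> simp

theorem four_dvd_of (k n : ℕ) (h : k % 4 = 0) (hd : k ∣ n) : n % 4 = 0 :=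
  Nat.mod_eq_zero_of_dvd ((Nat.dvd_of_mod_eq_zero h).trans hd)

theorem four_mul_le (k n : ℕ) (hk : k % 8 = 1) (hn : n % 8 = 4) (hd : k ∣ n) : 4 * k ≤ n := by
  obtain ⟨q, rfl⟩ := hd
  have hq : q % 8 = 4 := by
    rw [Nat.mul_mod, hk] at hn
    omega
  have : 4 ≤ q := by omega
  nlinarith

/-- if `k₁, k₂, k₃` are positive perfect squares each dividing
`1 + k₁ + k₂ + k₃`, then `k₁ = k₂ = k₃ = 1`. -/
theorem stmt8 (k₁ k₂ k₃ : ℕ) (h₁ : 0 < k₁) (h₂ : 0 < k₂) (h₃ : 0 < k₃)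
    (hs₁ : IsSquare k₁) (hs₂ : IsSquare k₂) (hs₃ : IsSquare k₃)
    (hd₁ : k₁ ∣ 1 + k₁ + k₂ + k₃) (hd₂ : k₂ ∣ 1 + k₁ + k₂ + k₃)
    (hd₃ : k₃ ∣ 1 + k₁ + k₂ + k₃) :
    k₁ = 1 ∧ k₂ = 1 ∧ k₃ = 1 := by
  have a₁ := sq_mod8 k₁ hs₁
  have a₂ := sq_mod8 k₂ hs₂
  have a₃ := sq_mod8 k₃ hs₃
  have b₁ : k₁ % 8 = 1 := by
    by_contra h
    have := four_dvd_of k₁ _ (by omega) hd₁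
    omega
  have b₂ : k₂ % 8 = 1 := by
    by_contra h
    have := four_dvd_of k₂ _ (by omega) hd₂
    omega
  have b₃ : k₃ % 8 = 1 := by
    by_contra h
    have := four_dvd_of k₃ _ (by omega) hd₃
    omega
  have c₁ := four_mul_le k₁ _ b₁ (by omega) hd₁
  have c₂ := four_mul_le k₂ _ b₂ (by omega) hd₂
  have c₃ := four_mul_le k₃ _ b₃ (by omega) hd₃
  omega
end

section
/- Let S be a 2×2 Fourier matrix satisfying the integrality hypothesis. Then S = (1/√2)·[[1, 1], [1, −1]], i.e., S_{00} = S_{01} = S_{10} = 1/√2 and S_{11} = −1/√2. -/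
open Complex Matrix BigOperators

namespace FourierPaper

noncomputable section

/-- the unique `2 × 2` Fourier matrix satisfying the integrality
hypothesis is `(1/√2)·[[1,1],[1,−1]]`. -/
theorem stmt9 (S : Matrix (Fin 2) (Fin 2) ℂ)
    (hS : IsFourier S) (hint : IntegralityHyp S) :
    S 0 0 = ((Real.sqrt 2 : ℝ) : ℂ)⁻¹ ∧ S 0 1 = ((Real.sqrt 2 : ℝ) : ℂ)⁻¹ ∧
    S 1 0 = ((Real.sqrt 2 : ℝ) : ℂ)⁻¹ ∧ S 1 1 = -((Real.sqrt 2 : ℝ) : ℂ)⁻¹ := by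
  obtain ⟨D, _, hD, _⟩ := hint
  obtain ⟨hsymm, huni, hre, hpos, _⟩ := hS
  have e0 : S 0 0 = (((S 0 0).re : ℝ) : ℂ) := Complex.ext (by simp) (by simp [hre 0])
  have e1 : S 1 0 = (((S 1 0).re : ℝ) : ℂ) := Complex.ext (by simp) (by simp [hre 1])
  have hs : S 0 1 = S 1 0 := hsymm 0 1
  have ha := hpos 0
  have hb := hpos 1
  generalize (S 0 0).re = a at *
  generalize (S 1 0).re = b at *
  have ha0 : (a : ℂ) ≠ 0 := by exact_mod_cast ha.ne'
  have hb0 : (b : ℂ) ≠ 0 := by exact_mod_cast hb.ne'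
  have u00 := congrFun (congrFun huni 0) 0
  have u10 := congrFun (congrFun huni 1) 0
  simp [Matrix.mul_apply, Fin.sum_univ_two, hs, e0, e1] at u00 u10
  have hab : a * a + b * b = 1 := by exact_mod_cast u00
  have hc : S 1 1 = -(a : ℂ) := by
    apply mul_right_cancel₀ hb0
    linear_combination u10
  have h0 := hD 0
  have h1 := hD 1
  simp [nrm, allen, Fin.sum_univ_two, hs, e0, e1, hc, Complex.normSq_ofReal, ha.ne', hb.ne'] at h0 h1
  have hprod : ((D 0 : ℝ) - 1) * ((D 1 : ℝ) - 1) = 1 := by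
    rw [← h0, ← h1]
    field_simp
    try ring
  have hz : ((D 0 : ℤ) - 1) * ((D 1 : ℤ) - 1) = 1 := by exact_mod_cast hprod
  have hD0 : (D 0 : ℝ) = 2 := by
    rcases Int.mul_eq_one_iff_eq_one_or_neg_one.mp hz with h | h
    · have : (D 0 : ℤ) = 2 := by omega
      exact_mod_cast this
    · exfalso
      have : (D 0 : ℝ) = 0 := by
        have : (D 0 : ℤ) = 0 := by omega
        exact_mod_cast this
      rw [this] at h0
      have : 0 < b * b / (a * a) := by positivity
      linarith
  rw [hD0] at h0
  have hq : b * b = a * a := by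
    field_simp at h0
    nlinarith
  have hba : b = a := by nlinarith
  subst hba
  have hb2 : b = (Real.sqrt 2)⁻¹ := by
    rw [← Real.sqrt_inv, eq_comm, Real.sqrt_eq_iff_mul_self_eq (by norm_num) hb.le]
    linarith
  rw [hs, hc, e0, e1, hb2]
  simp

end

end FourierPaper
end

section
/- Let S be a 3×3 real Fourier matrix satisfying the integrality hypothesis. Then the multiset of degrees {k₁, k₂} equals {1, 2}, and there is a permutation σ of {0,1,2} with σ(0) = 0 such that S_{σ(i),σ(j)} = M_{ij} for all i, j, where M = [[1/2, 1/2, 1/√2], [1/2, 1/2, −1/√2], [1/√2, −1/√2, 0]]. -/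
open Complex Matrix BigOperators

namespace FourierPaper

noncomputable section

/-- The unique (up to simultaneous permutation) `3 × 3` real Fourier matrix. -/
def rank3Matrix : Matrix (Fin 3) (Fin 3) ℂ :=
  !![1/2, 1/2, ((Real.sqrt 2 : ℝ) : ℂ)⁻¹;
     1/2, 1/2, -((Real.sqrt 2 : ℝ) : ℂ)⁻¹;
     ((Real.sqrt 2 : ℝ) : ℂ)⁻¹, -((Real.sqrt 2 : ℝ) : ℂ)⁻¹, 0]

theorem core_arith (m n : ℕ) (hm : 0 < m) (h1 : m ∣ 1 + m + n) (h2 : n ∣ 1 + m + n)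
    (hmn : m ≤ n) : (m = 1 ∧ n = 1) ∨ (m = 1 ∧ n = 2) ∨ (m = 2 ∧ n = 3) := by
  have h2' : n ∣ 1 + m := (Nat.dvd_add_left (dvd_refl n)).1 h2
  have hle := Nat.le_of_dvd (by omega) h2'
  rcases (by omega : n = m ∨ n = m + 1) with h | h
  · subst h
    have : n ∣ 1 := (Nat.dvd_add_left (dvd_refl n)).1 h2'
    have := Nat.dvd_one.1 this
    omega
  · subst h
    have h3 : m ∣ 2 := by
      have : m ∣ 2 + 2 * m := by convert h1 using 1; ring
      exact (Nat.dvd_add_left (Dvd.intro_left 2 rfl)).1 this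
    have := Nat.le_of_dvd (by norm_num) h3
    omega

set_option maxHeartbeats 1000000 in
theorem core (a b c p q r : ℝ) (ha : 0 < a) (hb : 0 < b) (hc : 0 < c)
    (e1 : a^2 + b^2 + c^2 = 1) (e2 : a*b + b*p + c*q = 0) (e3 : a*c + b*q + c*r = 0)
    (e4 : b^2 + p^2 + q^2 = 1) (e5 : b*c + p*q + q*r = 0)
    (hN : ∃ z : ℤ, b^3/a + p^3/b + q^3/c = z)
    (m n : ℕ) (hbm : b^2 = m * a^2) (hcn : c^2 = n * a^2) (hm : 0 < m)
    (h1 : m ∣ 1 + m + n) (h2 : n ∣ 1 + m + n) (hmn : m ≤ n) :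
    a = 1/2 ∧ b = 1/2 ∧ c = (Real.sqrt 2)⁻¹ ∧ p = 1/2 ∧ q = -(Real.sqrt 2)⁻¹ ∧ r = 0 := by
  have hq : (b*c - a*q)^2 = q^2 := by
    linear_combination b * c * e5 - q * c * e2 - q * b * e3 + q^2 * e1
  have hq' : b*c - a*q = q ∨ b*c - a*q = -q := sq_eq_sq_iff_eq_or_eq_neg.1 hq
  obtain ⟨z, hz⟩ := hN
  rcases core_arith m n hm h1 h2 hmn with ⟨rfl, rfl⟩ | ⟨rfl, rfl⟩ | ⟨rfl, rfl⟩
  · exfalso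
    push_cast at hbm hcn
    have hba : b = a := by nlinarith
    have hca : c = a := by nlinarith
    subst hba; subst hca
    have hp : p = -c - q := by
      have : c * (c + p + q) = 0 := by linear_combination e2
      rcases mul_eq_zero.1 this with h | h <;> linarith
    have hz' : (z : ℝ) = -1/2 := by
      have i1 : c^3/c + p^3/c + q^3/c = 3*p*q + (c^2+p^2+q^2-p*q-c*p-c*q) *(c+p+q)/c := by
        field_simp; ring
      have i2 : c + p + q = 0 := by linarith
      rw [← hz, i1, i2, hp]
      rw [hp] at e4
      simp only [mul_zero, zero_div, add_zero]
      linear_combination -3/2*e4 + e1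
    have : (2 * z : ℝ) = -1 := by linarith
    have : 2 * z = -1 := by exact_mod_cast this
    omega
  · push_cast at hbm hcn
    have hba : b = a := by nlinarith
    subst hba
    have hb2 : b = 1/2 := by nlinarith
    subst hb2
    have hc2 : c^2 = 1/2 := by linarith
    have hcs : c = (Real.sqrt 2)⁻¹ := by
      rw [← Real.sqrt_inv]
      symm
      rw [Real.sqrt_eq_iff_mul_self_eq (by norm_num) hc.le]
      nlinarith
    rcases hq' with h | h
    · exfalso
      have hq3 : q = c / 3 := by linarith
      have hp : p = -5/6 := by rw [hq3] at e2; linear_combination 2*e2 - (2/3)*hc2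
      have hz' : (z : ℝ) = -8/9 := by
        have i1 : (c/3)^3/c = c^2/27 := by field_simp; norm_num
        rw [← hz, hp, hq3, i1, hc2]; norm_num
      have : (9 * z : ℝ) = -8 := by linarith
      have : 9 * z = -8 := by exact_mod_cast this
      omega
    · have hq3 : q = -c := by linarith
      have hp : p = 1/2 := by rw [hq3] at e2; linear_combination 2*e2 + 2*hc2
      have hr : r = 0 := by
        have : c * r = 0 := by rw [hq3] at e3; linarith
        rcases mul_eq_zero.1 this with h | h <;> linarith
      exact ⟨rfl, rfl, hcs, hp, by rw [hq3, hcs], hr⟩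
  · exfalso
    push_cast at hbm hcn
    have a2 : a^2 = 1/6 := by linarith
    have b2 : b^2 = 1/3 := by linarith
    have c2 : c^2 = 1/2 := by linarith
    have habc : a = b * c := by
      have : a^2 = (b*c)^2 := by rw [mul_pow, a2, b2, c2]; norm_num
      exact (sq_eq_sq₀ ha.le (by positivity)).1 this
    have hz1 : (z:ℝ) = 2*c/3 + 3*b*p^3 + 2*c*q^3 := by
      have i1 : b^3/a = 2*c/3 := by
        rw [div_eq_iff ha.ne', habc]; linear_combination b * b2 - 2/3*b*c2
      have i2 : p^3/b = 3*b*p^3 := by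
        rw [div_eq_iff hb.ne']; linear_combination -3 * p^3 * b2
      have i3 : q^3/c = 2*c*q^3 := by
        rw [div_eq_iff hc.ne']; linear_combination -2 * q^3 * c2
      rw [← hz, i1, i2, i3]
    have hp : p = -a - 3*a*q := by
      linear_combination 3*b*e2 - 3*(p+a) * b2 + 3*q * habc
    have key : ∀ δ : ℝ, δ^2 = 1 → b*c - a*q = δ*q → (z:ℝ)^2 = 29/625 + 36/625*δ*a := by
      intro δ hδ h
      have hqv : q = (6*δ*a - 1)/5 := by
        linear_combination (6/5)*(a-δ)*h + (6/5)*(a-δ)*habc + (6/5)*(q-1)*a2 + 6/5*a2*0 - (6/5)*q*hδ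
      have hpv : p = -(2*a + 3*δ)/5 := by
        rw [hp, hqv]; linear_combination -(18/5)*δ*a2
      have hba : b * a = c/3 := by rw [habc]; linear_combination c * b2
      have hca : c * a = b/2 := by rw [habc]; linear_combination b * c2
      have p3 : (2*a + 3*δ)^3 = (166/3)*a + 33*δ := by
        linear_combination (8*a+36*δ)*a2 + (54*a + 27*δ)*hδ
      have q3 : (6*δ*a-1)^3 = 54*δ*a - 19 := by
        linear_combination (216*δ^3*a-108*δ^2)*a2 + (36*δ*a-18)*hδ
      have hzv : (z:ℝ) = -(2*c + 9*δ*b)/25 := by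
        rw [hz1, hpv, hqv]
        linear_combination -(3/125)*b*p3 + (2/125)*c*q3 - (166/125)*hba + (108/125)*δ*hca
      rw [hzv]
      linear_combination (4/625)*c2 + (81/625)*δ^2*b2 + (27/625)*hδ - (36/625)*δ*habc
    have ha1 : a < 1/2 := by nlinarith
    have hzz : 0 < (z:ℝ)^2 ∧ (z:ℝ)^2 < 1 := by
      rcases hq' with h | h
      · have := key 1 (by norm_num) (by linarith)
        constructor <;> linarith
      · have := key (-1) (by norm_num) (by linarith)
        constructor <;> linarith
    have g1 : 0 < z^2 := by exact_mod_cast hzz.1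
    have g2 : z^2 < 1 := by exact_mod_cast hzz.2
    omega

/-- every `3 × 3` real Fourier matrix satisfying the integrality
hypothesis has degrees `{1, 2}` and is, up to a simultaneous permutation fixing `0`,
the matrix `[[1/2,1/2,1/√2],[1/2,1/2,−1/√2],[1/√2,−1/√2,0]]`. -/
theorem stmt11 (S : Matrix (Fin 3) (Fin 3) ℂ)
    (hS : IsFourier S) (hreal : RealMatrix S)
    (hint : IntegralityHyp S) :
    ({deg S 1, deg S 2} : Multiset ℝ) = ({1, 2} : Multiset ℝ) ∧
    ∃ σ : Equiv.Perm (Fin 3), σ 0 = 0 ∧ ∀ i j, S (σ i) (σ j) = rank3Matrix i j := by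
  obtain ⟨D, hD0, hDn, hDd⟩ := hint
  obtain ⟨R, hR⟩ : ∃ R : Fin 3 → Fin 3 → ℝ, ∀ i j, S i j = (R i j : ℂ) :=
    ⟨fun i j => (S i j).re, fun i j => Complex.ext (by simp) (by simp [hreal i j])⟩
  have hsy : ∀ i j, R i j = R j i := fun i j => by
    have := hS.symm i j
    rw [hR, hR] at this
    exact_mod_cast this
  have hpos : ∀ i, 0 < R i 0 := fun i => by
    have := hS.col0_pos i
    rwa [hR, Complex.ofReal_re] at this
  have hun : ∀ i j, R i 0 * R j 0 + R i 1 * R j 1 + R i 2 * R j 2 = if i = j then 1 else 0 := by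
    intro i j
    have := congrFun (congrFun hS.unitary i) j
    rw [Matrix.mul_apply, Fin.sum_univ_three] at this
    simp only [Matrix.conjTranspose_apply, hR, Matrix.one_apply, RCLike.star_def,
      Complex.conj_ofReal] at this
    split_ifs at this ⊢ <;> exact_mod_cast this
  have hN : ∀ i, ∃ z : ℤ, R 0 i ^ 3 / R 0 0 + R 1 i ^ 3 / R 1 0 + R 2 i ^ 3 / R 2 0 = z := by
    intro i
    obtain ⟨z, hz⟩ := hS.structInt i i i
    refine ⟨z, ?_⟩
    rw [Fin.sum_univ_three] at hz
    simp only [hR, Complex.conj_ofReal] at hz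
    have hz' : R 0 i * R 0 i * R 0 i / R 0 0 + R 1 i * R 1 i * R 1 i / R 1 0
      + R 2 i * R 2 i * R 2 i / R 2 0 = z := by exact_mod_cast hz
    rw [← hz']; ring
  have hnrm : ∀ i, (D i : ℝ) * R i 0 ^ 2 = 1 := by
    intro i
    have h1 := hun i i
    have h0 := (hpos i).ne'
    rw [← hDn i]
    simp only [nrm, allen, Fin.sum_univ_three, hR, ← Complex.ofReal_div, Complex.normSq_ofReal]
    simp only [if_true] at h1
    field_simp
    linarith
  have hdeg : ∀ j, deg S j = (R 0 j / R 0 0) ^ 2 := by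
    intro j
    simp only [deg, allen, hR, ← Complex.ofReal_div, Complex.ofReal_re]
  obtain ⟨m, hm⟩ := hDd 1
  obtain ⟨n, hn⟩ := hDd 2
  have hk : ∀ i k, D 0 = D i * k → R i 0 ^ 2 = k * R 0 0 ^ 2 := by
    intro i k h
    have e0 := hnrm 0
    have ei := hnrm i
    rw [h] at e0
    push_cast at e0
    linear_combination (-(R i 0)^2) * e0 + k * R 0 0 ^ 2 * ei
  have hbm := hk 1 m hm
  have hcn := hk 2 n hn
  have u00 := hun 0 0
  have u01 := hun 0 1
  have u02 := hun 0 2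
  have u11 := hun 1 1
  have u12 := hun 1 2
  have u22 := hun 2 2
  have hN1 := hN 1
  have hN2 := hN 2
  have p0 := hpos 0
  have p1 := hpos 1
  have p2 := hpos 2
  have hm0 : 0 < m := Nat.pos_of_ne_zero fun h => by have := hD0 0; simp [hm, h] at this
  have hn0 : 0 < n := Nat.pos_of_ne_zero fun h => by have := hD0 0; simp [hn, h] at this
  simp only [hsy 0 1, hsy 0 2, hsy 1 2] at u00 u01 u02 u11 u12 u22 hN1 hN2
  rw [if_neg (by decide)] at u02 u12
  norm_num at u00 u01 u11 u22
  have hsum : D 0 = 1 + m + n := by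
    have e0 := hnrm 0
    have h2 : (D 0 : ℝ) = 1 + m + n := by
      have h3 : ((D 0 : ℝ) - (1 + m + n)) * R 0 0 ^ 2 = 0 := by
        linear_combination e0 - u00 + hbm + hcn
      rcases mul_eq_zero.1 h3 with h | h
      · linarith
      · exact absurd h (by positivity)
    exact_mod_cast h2
  have d1 : m ∣ 1 + m + n := hsum ▸ Dvd.intro_left _ hm.symm
  have d2 : n ∣ 1 + m + n := hsum ▸ Dvd.intro_left _ hn.symm
  have hs2 : Real.sqrt 2 ^ 2 = 2 := Real.sq_sqrt (by norm_num)
  have hs0 : Real.sqrt 2 ≠ 0 := by positivity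
  rw [hdeg 1, hdeg 2, hsy 0 1, hsy 0 2]
  rcases le_total m n with hmn | hmn
  · obtain ⟨ra, rb, rc, rp, rq, rr⟩ := core (R 0 0) (R 1 0) (R 2 0) (R 1 1) (R 2 1) (R 2 2)
      p0 p1 p2 (by linarith) (by linarith) (by linarith) (by linarith) (by linarith)
      hN1 m n hbm hcn hm0 d1 d2 hmn
    refine ⟨?_, 1, rfl, ?_⟩
    · rw [ra, rb, rc]
      congr 1
      · norm_num
      · congr 1
        field_simp
        linarith
    · intro i j
      rw [Equiv.Perm.one_apply, Equiv.Perm.one_apply, hR]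
      fin_cases i <;> fin_cases j <;>
        simp [rank3Matrix, hsy 0 1, hsy 0 2, hsy 1 2, ra, rb, rc, rp, rq, rr]
  · obtain ⟨z, hz⟩ := hN2
    obtain ⟨ra, rb, rc, rp, rq, rr⟩ := core (R 0 0) (R 2 0) (R 1 0) (R 2 2) (R 2 1) (R 1 1)
      p0 p2 p1 (by linarith) (by linarith) (by linarith) (by linarith) (by linarith)
      ⟨z, by linarith⟩ n m hcn hbm hn0 (by convert d2 using 1; ring) (by convert d1 using 1; ring) hmn
    refine ⟨?_, Equiv.swap 1 2, by decide, ?_⟩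
    · rw [ra, rb, rc, Multiset.pair_comm]
      congr 1
      · norm_num
      · congr 1
        field_simp
        linarith
    · intro i j
      have s0 : Equiv.swap (1 : Fin 3) 2 0 = 0 := by decide
      have s1 : Equiv.swap (1 : Fin 3) 2 1 = 2 := by decide
      have s2 : Equiv.swap (1 : Fin 3) 2 2 = 1 := by decide
      rw [hR]
      fin_cases i <;> fin_cases j <;>
        simp [rank3Matrix, s0, s1, s2, hsy 0 1, hsy 0 2, hsy 1 2, ra, rb, rc, rp, rq, rr]

end

end FourierPaper
end
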